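/- Every generalized derivation on a C*-algebra is bounded. That is, if A is a C*-algebra, d : A → A is a derivation, and δ : A → A is a linear map satisfying δ(xa) = δ(x)a + x d(a) for all x, a ∈ A, then δ is continuous. -/

import Mathlib

open Filter Topology

theorem gd_core {A : Type*} [NonUnitalCStarAlgebra A] (a : A) (ha : IsSelfAdjoint a)
    (hne : a ≠ 0) : ∃ (x : ℝ) (k : A), |x| = ‖a‖ ∧ a = x • ((2:ℝ) • k - k * k) ∧
      ∀ ε : ℝ, 0 < ε → ε < 1 → ∃ c : A, IsSelfAdjoint c ∧ ‖c‖ = 1 ∧ ‖c - k * c‖ ≤ ε ∧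
        k * c = c * k := by
  obtain ⟨⟨x, hx, hxa⟩, hub⟩ :=
    NonUnitalIsometricContinuousFunctionalCalculus.isGreatest_norm_quasispectrum (𝕜 := ℝ) a ha
  have hx0 : x ≠ 0 := by
    rintro rfl
    exact hne (by simpa [eq_comm] using hxa)
  have hle : ∀ t ∈ quasispectrum ℝ a, t / x ≤ 1 := by
    intro t ht
    have h1 : |t| ≤ |x| := by
      have := hub ⟨t, ht, rfl⟩
      simp only [Real.norm_eq_abs] at this hxa
      rw [hxa]; exact this
    calc t / x ≤ |t / x| := le_abs_self _
      _ = |t| / |x| := abs_div _ _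
      _ ≤ 1 := div_le_one_of_le₀ h1 (abs_nonneg _)
  set f : ℝ → ℝ := fun t => 1 - √(1 - t / x) with hf
  have hfc : Continuous f := by fun_prop
  have hf0 : f 0 = 0 := by simp [hf]
  refine ⟨x, cfcₙ f a, hxa, ?_, ?_⟩
  · rw [← cfcₙ_mul f f a hfc.continuousOn hf0 hfc.continuousOn hf0,
      ← cfcₙ_const_mul (2:ℝ) f a hfc.continuousOn hf0,
      ← cfcₙ_sub _ _ a (by fun_prop) (by simp [hf0]) (by fun_prop) (by simp [hf0]),
      ← cfcₙ_const_mul x _ a (by fun_prop) (by simp [hf0])]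
    conv_lhs => rw [← cfcₙ_id' ℝ a]
    apply cfcₙ_congr
    intro t ht
    have h := Real.mul_self_sqrt (sub_nonneg.2 (hle t ht))
    simp only [hf]
    have : x * (t / x) = t := by field_simp
    linear_combination x * h - this
  · intro ε h0 h1
    set g : ℝ → ℝ := fun t => max 0 (1 - √(1 - t / x) / ε) with hg
    have hgc : Continuous g := by fun_prop
    have hg0 : g 0 = 0 := by
      simp only [hg, zero_div, sub_zero, Real.sqrt_one]
      apply max_eq_left
      have : 1 ≤ 1 / ε := by rw [le_div_iff₀ h0]; linarith
      linarith
    refine ⟨cfcₙ g a, cfcₙ_predicate g a, le_antisymm ?_ ?_, ?_, cfcₙ_commute_cfcₙ f g a⟩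
    · apply norm_cfcₙ_le
      intro t ht
      rw [Real.norm_of_nonneg (le_max_left _ _)]
      apply max_le zero_le_one
      have := div_nonneg (Real.sqrt_nonneg (1 - t / x)) h0.le
      linarith
    · have := norm_apply_le_norm_cfcₙ g a hx hgc.continuousOn hg0 ha
      simpa [hg, div_self hx0] using this
    · rw [← cfcₙ_mul f g a hfc.continuousOn hf0 hgc.continuousOn hg0,
        ← cfcₙ_sub _ _ a (by fun_prop) (by simp [hg0]) (by fun_prop) (by simp [hf0])]
      apply norm_cfcₙ_le
      intro t ht
      have hs := Real.sqrt_nonneg (1 - t / x)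
      have e : g t - f t * g t = √(1 - t / x) * g t := by simp only [hf]; ring
      rw [e, Real.norm_of_nonneg (mul_nonneg hs (le_max_left _ _))]
      change √(1 - t / x) * max 0 (1 - √(1 - t / x) / ε) ≤ ε
      set s := √(1 - t / x)
      rcases le_total s ε with h | h
      · have : max 0 (1 - s / ε) ≤ 1 := by
          apply max_le zero_le_one
          have := div_nonneg hs h0.le
          linarith
        nlinarith
      · rw [max_eq_left]
        · simpa using h0.le
        · have : 1 ≤ s / ε := by rw [le_div_iff₀ h0]; linarith
          linarith

theorem gd_dissip {A : Type*} [NonUnitalCStarAlgebra A]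
    (d : A →ₗ[ℂ] A) (hd : ∀ a b : A, d (a * b) = d a * b + a * d b)
    (a : A) (ha : IsSelfAdjoint a) (l : ℝ) : ‖a‖ ≤ ‖a + l • d a‖ := by
  by_cases hne : a = 0
  · simp [hne]
  obtain ⟨x, k, hxa, hak, H⟩ := gd_core a ha hne
  have key : ∀ ε : ℝ, 0 < ε → ε < 1 →
      ‖a‖ ≤ ‖a + l • d a‖ + ε * (|x| + 2 * (|l * x| * ‖d k‖)) := by
    intro ε h0 h1
    obtain ⟨c, hc, hc1, hce, hkc⟩ := H ε h0 h1
    set e := c - k * c with he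
    have hkc' : k * c = c - e := by simp [he]
    have hck' : c * k = c - e := by rw [← hkc, hkc']
    have hda : d a = x • ((2:ℝ) • d k - (d k * k + k * d k)) := by
      conv_lhs => rw [hak]
      rw [LinearMap.map_smul_of_tower, map_sub, LinearMap.map_smul_of_tower, hd]
    have h2 : c * d a * c = x • (c * d k * e + e * d k * c) := by
      rw [hda]
      have : c * ((2:ℝ) • d k - (d k * k + k * d k)) * c =
          (2:ℝ) • (c * d k * c) - (c * d k * (k * c) + (c * k) * d k * c) := by
        simp only [mul_sub, sub_mul, mul_add, add_mul, mul_smul_comm, smul_mul_assoc, mul_assoc]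
      rw [mul_smul_comm, smul_mul_assoc, this, hkc', hck', two_smul]
      congr 1
      noncomm_ring
    have h3 : c * a * c = x • (c * c - e * e) := by
      rw [hak]
      have : c * ((2:ℝ) • k - k * k) * c = (2:ℝ) • (c * (k * c)) - (c * k) * (k * c) := by
        simp only [mul_sub, sub_mul, mul_smul_comm, smul_mul_assoc, mul_assoc]
      have hec : c * e = e * c := by
        simp only [he, mul_sub, sub_mul]
        rw [← mul_assoc, ← hkc]
      rw [mul_smul_comm, smul_mul_assoc, this, hkc', hck', two_smul]
      congr 1
      simp only [mul_sub, sub_mul, hec]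
      abel
    have h4 : x • (c * c) = c * (a + l • d a) * c + x • (e * e)
        - (l * x) • (c * d k * e + e * d k * c) := by
      rw [mul_add, add_mul, h3, mul_smul_comm, smul_mul_assoc, h2, smul_sub, mul_smul]
      abel
    have hcc : ‖c * c‖ = 1 := by
      have := CStarRing.norm_star_mul_self (x := c)
      rw [hc.star_eq] at this
      rw [this, hc1, one_mul]
    have b1 : ‖c * (a + l • d a) * c‖ ≤ ‖a + l • d a‖ := by
      calc _ ≤ ‖c‖ * ‖a + l • d a‖ * ‖c‖ := norm_mul₃_le
        _ = _ := by rw [hc1]; ring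
    have b2 : ‖e * e‖ ≤ ε := by
      calc _ ≤ ‖e‖ * ‖e‖ := norm_mul_le _ _
        _ ≤ ε := by nlinarith [norm_nonneg e]
    have b3 : ‖c * d k * e + e * d k * c‖ ≤ 2 * (ε * ‖d k‖) := by
      calc _ ≤ ‖c‖ * ‖d k‖ * ‖e‖ + ‖e‖ * ‖d k‖ * ‖c‖ :=
            (norm_add_le _ _).trans (add_le_add norm_mul₃_le norm_mul₃_le)
        _ = 2 * (‖e‖ * ‖d k‖) := by rw [hc1]; ring
        _ ≤ _ := by gcongr
    calc ‖a‖ = ‖x • (c * c)‖ := by rw [norm_smul, hcc, mul_one, ← hxa, Real.norm_eq_abs]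
      _ ≤ ‖c * (a + l • d a) * c‖ + ‖x • (e * e)‖ + ‖(l * x) • (c * d k * e + e * d k * c)‖ := by
        rw [h4]; exact (norm_sub_le _ _).trans (by gcongr; exact norm_add_le _ _)
      _ ≤ ‖a + l • d a‖ + |x| * ε + |l * x| * (2 * (ε * ‖d k‖)) := by
        rw [norm_smul, norm_smul, Real.norm_eq_abs, Real.norm_eq_abs]; gcongr
      _ = _ := by ring
  set M := |x| + 2 * (|l * x| * ‖d k‖)
  have ht : Tendsto (fun ε : ℝ => ‖a + l • d a‖ + ε * M) (𝓝[>] 0) (𝓝 (‖a + l • d a‖ + 0 * M)) :=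
    (Continuous.tendsto (by fun_prop) 0).mono_left nhdsWithin_le_nhds
  rw [zero_mul, add_zero] at ht
  refine ge_of_tendsto ht ?_
  filter_upwards [Ioo_mem_nhdsGT (zero_lt_one (α := ℝ))] with ε h
  exact key ε h.1 h.2

theorem gd_closable {A : Type*} [NonUnitalCStarAlgebra A]
    (d : A →ₗ[ℂ] A) (hd : ∀ a b : A, d (a * b) = d a * b + a * d b)
    (u : ℕ → A) (hu : ∀ n, IsSelfAdjoint (u n)) (y : A) (hy : IsSelfAdjoint y)
    (h0 : Tendsto u atTop (𝓝 0)) (h1 : Tendsto (fun n => d (u n)) atTop (𝓝 y)) : y = 0 := by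
  have key : ∀ l : ℝ, 0 < l → ‖y‖ ≤ l * ‖d y‖ := by
    intro l hl
    have h : ∀ n, ‖u n + l • y‖ ≤ ‖(u n + l • y) + (-l) • (d (u n) + l • d y)‖ := by
      intro n
      have := gd_dissip d hd (u n + l • y) ((hu n).add ((IsSelfAdjoint.all l).smul hy)) (-l)
      rwa [map_add, LinearMap.map_smul_of_tower] at this
    have t1 : Tendsto (fun n => ‖u n + l • y‖) atTop (𝓝 ‖0 + l • y‖) :=
      (h0.add_const _).norm
    have t2 : Tendsto (fun n => ‖(u n + l • y) + (-l) • (d (u n) + l • d y)‖) atTop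
        (𝓝 ‖(0 + l • y) + (-l) • (y + l • d y)‖) :=
      ((h0.add_const _).add ((h1.add_const _).const_smul _)).norm
    have := le_of_tendsto_of_tendsto' t1 t2 h
    have e : (0 + l • y) + (-l) • (y + l • d y) = l • ((-l) • d y) := by
      simp only [smul_add, neg_smul, smul_neg]; abel
    rw [e, zero_add, norm_smul, norm_smul, norm_smul, Real.norm_of_nonneg hl.le, norm_neg,
      Real.norm_of_nonneg hl.le] at this
    exact le_of_mul_le_mul_left this hl
  have ht : Tendsto (fun l : ℝ => l * ‖d y‖) (𝓝[>] 0) (𝓝 (0 * ‖d y‖)) :=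
    (Continuous.tendsto (by fun_prop) 0).mono_left nhdsWithin_le_nhds
  rw [zero_mul] at ht
  have : ‖y‖ ≤ 0 := by
    refine ge_of_tendsto ht ?_
    filter_upwards [self_mem_nhdsWithin] with l h
    exact key l h
  exact norm_le_zero_iff.1 this

/-- Continuity of star-derivations. -/
theorem gd_star_cont {A : Type*} [NonUnitalCStarAlgebra A]
    (d : A →ₗ[ℂ] A) (hd : ∀ a b : A, d (a * b) = d a * b + a * d b)
    (hs : ∀ a, d (star a) = star (d a)) : Continuous d := by
  have z : ∀ (u : ℕ → A) (y : A), Tendsto u atTop (𝓝 0) →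
      Tendsto (fun n => d (u n)) atTop (𝓝 y) → y + star y = 0 := by
    intro u y h0 h1
    refine gd_closable d hd (fun n => u n + star (u n)) (fun n => IsSelfAdjoint.add_star_self _) _
      (IsSelfAdjoint.add_star_self _) ?_ ?_
    · simpa using h0.add h0.star
    · simpa [hs] using h1.add h1.star
  apply LinearMap.continuous_of_seq_closed_graph
  intro u x y hu hy
  have h0 : Tendsto (fun n => u n - x) atTop (𝓝 0) := by simpa using hu.sub_const x
  have h1 : Tendsto (fun n => d (u n - x)) atTop (𝓝 (y - d x)) := by
    simpa using hy.sub_const (d x)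
  have e1 := z _ _ h0 h1
  have e2 := z (fun n => Complex.I • (u n - x)) (Complex.I • (y - d x))
    (by simpa using h0.const_smul Complex.I)
    (by simpa only [map_smul] using h1.const_smul Complex.I)
  rw [← sub_eq_zero]
  set w := y - d x
  rw [star_smul, Complex.star_def, Complex.conj_I, neg_smul, ← sub_eq_add_neg, ← smul_sub,
    smul_eq_zero] at e2
  have e3 := e2.resolve_left Complex.I_ne_zero
  have : (2:ℝ) • w = 0 := by
    rw [two_smul, ← add_zero 0]; nth_rw 1 [← e1]; rw [← e3]; abel
  simpa using this

theorem gd_deriv_cont {A : Type*} [NonUnitalCStarAlgebra A]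
    (d : A →ₗ[ℂ] A) (hd : ∀ a b : A, d (a * b) = d a * b + a * d b) : Continuous d := by
  let d' : A →ₗ[ℂ] A :=
    { toFun := fun a => star (d (star a))
      map_add' := by intro a b; simp
      map_smul' := by intro r a; simp [star_smul] }
  have hd'a : ∀ a, d' a = star (d (star a)) := fun _ => rfl
  have hd' : ∀ a b : A, d' (a * b) = d' a * b + a * d' b := by
    intro a b
    simp [hd'a, star_mul, hd, add_comm]
  have c1 : Continuous (d + d') := by
    apply gd_star_cont
    · intro a b; simp only [LinearMap.add_apply, hd, hd', mul_add, add_mul]; abel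
    · intro a; simp [hd'a, add_comm]
  have c2 : Continuous (Complex.I • (d - d')) := by
    apply gd_star_cont
    · intro a b
      simp only [LinearMap.smul_apply, LinearMap.sub_apply, hd, hd', mul_sub, sub_mul,
        mul_smul_comm, smul_mul_assoc, ← smul_add]
      congr 1; abel
    · intro a
      simp only [LinearMap.smul_apply, LinearMap.sub_apply, hd'a, star_smul, star_star, star_sub,
        Complex.star_def, Complex.conj_I, neg_smul, ← smul_neg, neg_sub]
  have : (d : A → A) = fun a => (2⁻¹ : ℂ) • ((d + d') a + (-Complex.I) • (Complex.I • (d - d')) a) := by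
    funext a
    simp only [LinearMap.smul_apply, LinearMap.sub_apply, LinearMap.add_apply, smul_smul]
    simp only [neg_mul, Complex.I_mul_I, neg_neg, one_smul]
    rw [show d a + d' a + (d a - d' a) = (2:ℂ) • d a by rw [two_smul]; abel, smul_smul]
    simp
  rw [this]
  exact (c1.add (c2.const_smul _)).const_smul _

theorem gd_bound {A : Type*} [NonUnitalCStarAlgebra A] [PartialOrder A] [StarOrderedRing A]
    (s x : A) (hs : 0 ≤ s) (hx : x * star x ≤ (s * s) * (s * s)) (g : ℝ → ℝ)
    (hg : Continuous g) (hg0 : g 0 = 0) (M : ℝ) (hM : 0 ≤ M)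
    (hb : ∀ t : ℝ, 0 ≤ t → t ≤ ‖s‖ → |g t * (t * t)| ≤ M) : ‖cfcₙ g s * x‖ ≤ M := by
  have hsa : IsSelfAdjoint s := .of_nonneg hs
  have hG : IsSelfAdjoint (cfcₙ g s) := cfcₙ_predicate g s
  set G := cfcₙ g s with hGd
  have e : G * (s * s) = cfcₙ (fun t => g t * (t * t)) s := by
    rw [cfcₙ_mul g (fun t => t * t) s hg.continuousOn hg0 (by fun_prop) (by simp),
      cfcₙ_mul (fun t => t) (fun t => t) s (by fun_prop) (by simp) (by fun_prop) (by simp),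
      cfcₙ_id' ℝ s]
  have e1 : ‖G * (s * s)‖ ≤ M := by
    rw [e]
    apply norm_cfcₙ_le
    intro t ht
    refine hb t (quasispectrum_nonneg_of_nonneg s hs t ht) ?_
    exact (le_abs_self t).trans
      (NonUnitalIsometricContinuousFunctionalCalculus.norm_quasispectrum_le s ht hsa)
  have h1 : (G * x) * star (G * x) ≤ (G * (s * s)) * star (G * (s * s)) := by
    have := star_right_conjugate_le_conjugate hx G
    simpa only [star_mul, hsa.star_eq, mul_assoc] using this
  have h2 := CStarAlgebra.norm_le_norm_of_nonneg_of_le (mul_star_self_nonneg _) h1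
  rw [CStarRing.norm_self_mul_star, CStarRing.norm_self_mul_star] at h2
  nlinarith [norm_nonneg (G * x), norm_nonneg (G * (s * s))]

theorem gd_factor {A : Type*} [NonUnitalCStarAlgebra A] [PartialOrder A] [StarOrderedRing A]
    (s x : A) (hs : 0 ≤ s) (hx : x * star x ≤ (s * s) * (s * s)) :
    ∃ u : A, x = s * u ∧ ‖u‖ ≤ ‖s‖ := by
  have hsa : IsSelfAdjoint s := .of_nonneg hs
  let r : ℕ → ℝ := fun n => 1 / ((n : ℝ) + 1)
  have hr : ∀ n, 0 < r n := fun n => Nat.one_div_pos_of_nat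
  have hr0 : Tendsto r atTop (𝓝 0) := tendsto_one_div_add_atTop_nhds_zero_nat
  have hrm : ∀ n m, n ≤ m → r m ≤ r n := fun n m h => Nat.one_div_le_one_div h
  let g : ℕ → ℝ → ℝ := fun n t => t / (t * t + r n * r n)
  have hden : ∀ n (t : ℝ), 0 < t * t + r n * r n := fun n t => by
    nlinarith [mul_self_nonneg t, mul_pos (hr n) (hr n)]
  have hgc : ∀ n, Continuous (g n) := fun n =>
    Continuous.div (by fun_prop) (by fun_prop) (fun t => (hden n t).ne')
  have hg0 : ∀ n, g n 0 = 0 := fun n => by simp [g]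
  -- t - g t * t^2 lies in [0, r]
  have hq : ∀ n (t : ℝ), 0 ≤ t → g n t * (t * t) ≤ t ∧ t - r n ≤ g n t * (t * t) := by
    intro n t ht
    have hp := hden n t
    have hrn := hr n
    have e : g n t * (t * t) = t * (t * t) / (t * t + r n * r n) := by simp only [g]; ring
    rw [e]
    constructor
    · rw [div_le_iff₀ hp]
      have : 0 ≤ t * (r n * r n) := by positivity
      nlinarith
    · rw [le_div_iff₀ hp]
      have h1 : 0 ≤ r n * (t * t + r n * r n - t * r n) := by
        apply mul_nonneg hrn.le
        nlinarith [sq_nonneg (t - r n), mul_nonneg ht hrn.le]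
      nlinarith
  let u : ℕ → A := fun n => cfcₙ (g n) s * x
  have hu : CauchySeq u := by
    refine cauchySeq_of_le_tendsto_0' r (fun n m hnm => ?_) hr0
    rw [dist_eq_norm]
    have : u n - u m = cfcₙ (fun t => g n t - g m t) s * x := by
      rw [cfcₙ_sub _ _ s (hgc n).continuousOn (hg0 n) (hgc m).continuousOn (hg0 m), sub_mul]
    rw [this]
    refine gd_bound s x hs hx _ ((hgc n).sub (hgc m)) (by simp [hg0]) _ (hr n).le ?_
    intro t ht _
    have h1 := hq n t ht
    have h2 := hq m t ht
    have h3 := hrm n m hnm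
    rw [Pi.sub_apply, sub_mul, abs_le]
    constructor <;> linarith [hr n]
  obtain ⟨v, hv⟩ := cauchySeq_tendsto_of_complete hu
  have hz : s * (x - s * v) = 0 := by
    have t1 : Tendsto (fun n => s * (x - s * u n)) atTop (𝓝 (s * (x - s * v))) :=
      (tendsto_const_nhds.sub (hv.const_mul s)).const_mul s
    refine tendsto_nhds_unique t1 ?_
    refine squeeze_zero_norm (a := fun n => r n * (‖s‖ * ‖s‖)) (fun n => ?_)
      (by simpa using hr0.mul_const (‖s‖ * ‖s‖))
    have : s * (x - s * u n) = cfcₙ (fun t => t - t * (t * g n t)) s * x := by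
      have hc := (hgc n).continuousOn (s := quasispectrum ℝ s)
      rw [cfcₙ_sub (fun t => t) (fun t => t * (t * g n t)) s (by fun_prop) (by simp) (by fun_prop)
        (by simp), cfcₙ_mul (fun t => t) (fun t => t * g n t) s (by fun_prop) (by simp)
        (by fun_prop) (by simp), cfcₙ_mul (fun t => t) (g n) s (by fun_prop) (by simp) hc (hg0 n),
        cfcₙ_id' ℝ s]
      simp only [u, mul_sub, sub_mul, mul_assoc]
    rw [this]
    have hc := hgc n
    refine gd_bound s x hs hx _ (by fun_prop) (by simp) _ (by have := hr n; positivity) ?_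
    intro t ht hts
    have h1 := hq n t ht
    have e : (t - t * (t * g n t)) * (t * t) = (t - g n t * (t * t)) * (t * t) := by ring
    rw [e, abs_of_nonneg (mul_nonneg (by linarith) (by positivity))]
    have := hr n
    apply mul_le_mul (by linarith) (by gcongr) (by positivity) this.le
  refine ⟨v, ?_, ?_⟩
  · set z := x - s * v with hzd
    have h1 : star z * (x * star x) * z ≤ star z * ((s * s) * (s * s)) * z :=
      star_left_conjugate_le_conjugate hx z
    have h2 : star z * ((s * s) * (s * s)) * z = 0 := by simp [mul_assoc, hz]
    have h3 : star (star x * z) * (star x * z) = 0 := by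
      apply le_antisymm _ (star_mul_self_nonneg _)
      rw [h2] at h1
      simpa [mul_assoc] using h1
    have h4 : star x * z = 0 := CStarRing.star_mul_self_eq_zero_iff _ |>.1 h3
    have h5 : star z * z = 0 := by
      conv_lhs => rw [hzd]
      rw [star_sub, star_mul, hsa.star_eq, sub_mul, ← hzd, h4, mul_assoc, hz]
      simp
    have : z = 0 := by simpa using h5
    exact sub_eq_zero.1 this
  · refine le_of_tendsto hv.norm (Eventually.of_forall fun n => ?_)
    refine gd_bound s x hs hx _ (hgc n) (hg0 n) _ (norm_nonneg _) ?_
    intro t ht hts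
    have : 0 ≤ g n t * (t * t) := by
      have := hden n t
      simp only [g]; positivity
    rw [abs_of_nonneg this]
    exact (hq n t ht).1.trans hts

theorem gd_central_aux {A : Type*} [NonUnitalCStarAlgebra A] [PartialOrder A] [StarOrderedRing A]
    (T : A →ₗ[ℂ] A) (hT : ∀ x a : A, T (x * a) = T x * a) : Continuous T := by
  by_contra hcon
  have H : ∀ n : ℕ, ∃ x : A, ‖x‖ ≤ (1 / 2) ^ n ∧ (n : ℝ) < ‖T x‖ := by
    intro n
    by_contra! hn
    apply hcon
    refine AddMonoidHomClass.continuous_of_bound T (n * 2 ^ n) fun x => ?_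
    by_cases hx : x = 0
    · simp [hx]
    have hx' : 0 < ‖x‖ := norm_pos_iff.2 hx
    have := hn (((1 / 2) ^ n * ‖x‖⁻¹ : ℝ) • x) (by
      rw [norm_smul, Real.norm_of_nonneg (by positivity)]
      field_simp; simp)
    rw [LinearMap.map_smul_of_tower, norm_smul, Real.norm_of_nonneg (by positivity)] at this
    calc ‖T x‖ = ((1 / 2) ^ n * ‖x‖⁻¹ * ‖T x‖) * (2 ^ n * ‖x‖) := by
          rw [one_div, inv_pow]; field_simp
      _ ≤ n * (2 ^ n * ‖x‖) := by gcongr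
      _ = _ := by ring
  choose x hx hTx using H
  have hsum : Summable (fun n => x n * star (x n)) := by
    refine Summable.of_norm_bounded (g := fun n => ((1:ℝ) / 2) ^ n) summable_geometric_two fun n => ?_
    rw [CStarRing.norm_self_mul_star]
    have : ((1:ℝ) / 2) ^ n ≤ 1 := pow_le_one₀ (by norm_num) (by norm_num)
    nlinarith [hx n, norm_nonneg (x n)]
  set c := ∑' n, x n * star (x n)
  have hc : 0 ≤ c := tsum_nonneg fun n => mul_star_self_nonneg _
  have hle : ∀ n, x n * star (x n) ≤ c := fun n =>
    hsum.le_tsum n fun m _ => mul_star_self_nonneg _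
  set s := CFC.sqrt (CFC.sqrt c)
  have hs : 0 ≤ s := CFC.sqrt_nonneg _
  have hss : (s * s) * (s * s) = c := by
    rw [CFC.sqrt_mul_sqrt_self (CFC.sqrt c) (CFC.sqrt_nonneg _), CFC.sqrt_mul_sqrt_self c hc]
  obtain ⟨n, hn⟩ := exists_nat_gt (‖T s‖ * ‖s‖)
  obtain ⟨v, hv, hvs⟩ := gd_factor s (x n) hs (by rw [hss]; exact hle n)
  have h1 := hTx n
  rw [hv, hT] at h1
  have : ‖T s * v‖ ≤ ‖T s‖ * ‖s‖ := (norm_mul_le _ _).trans (by gcongr)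
  linarith

theorem gd_central {A : Type*} [NonUnitalCStarAlgebra A]
    (T : A →ₗ[ℂ] A) (hT : ∀ x a : A, T (x * a) = T x * a) : Continuous T := by
  let _ := CStarAlgebra.spectralOrder A
  have _ := CStarAlgebra.spectralOrderedRing A
  exact gd_central_aux T hT


/-- Every generalized derivation on a C*-algebra is bounded: if `A` is a
C*-algebra, `d : A → A` is a derivation and `δ : A → A` is a linear map with
`δ (x * a) = δ x * a + x * d a` for all `x a`, then `δ` is continuous. -/
theorem generalized_derivation_continuous_of_cstar
    {A : Type*} [NonUnitalCStarAlgebra A]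
    (d : A →ₗ[ℂ] A) (hd : ∀ a b : A, d (a * b) = d a * b + a * d b)
    (δ : A →ₗ[ℂ] A) (hδ : ∀ x a : A, δ (x * a) = δ x * a + x * d a) :
    Continuous δ := by
  have h1 := gd_deriv_cont d hd
  have h2 : Continuous (δ - d) := by
    apply gd_central
    intro x a
    simp only [LinearMap.sub_apply, hδ, hd, sub_mul]
    abel
  have : (δ : A → A) = fun a => (δ - d) a + d a := by funext a; simp
  rw [this]
  exact h2.add h1
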